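/- Let an ARC(D,T) task class satisfy the identifiability assumption with constant c > 0, and suppose that for each step t a candidate family equal to the true subtask family P_{Θ_t}, listed as n_θ (possibly repeating) candidates, is available. Then there exists a procedure which, given ℓ i.i.d. demonstration samples from the joint distribution of an arbitrary task f_θ̃ = (P_{θ̃₁},…,P_{θ̃_T}), outputs a tuple (P_{ζ₁},…,P_{ζ_T}) with P_{ζ_t} in the candidate family for each t, such that Pr[(P_{ζ₁},…,P_{ζ_T}) ≠ (P_{θ̃₁},…,P_{θ̃_T})] ≤ T·n_θ·e^{−c²·ℓ/2}. In particular, if ℓ ≥ 2·ln(100·T·n_θ)/c², this failure probability is at most 0.01. -/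

import Mathlib

/-! The procedure is stepwise maximum likelihood: at step `t` it returns the subtask that
maximizes the conditional likelihood of the observed step-`t` tokens given their histories.
The prefix and suffix factors of the joint density do not depend on the step-`t` subtask, so if
index `j` beats the true index, then the sample `ω` is at least as likely under the task with step
`t` replaced by `j` as under the true task. Hence the error event for `(t, j)` has probability at
most `∑ ω, √(P(ω) Q(ω)) = BC(P, Q) ^ ℓ`, where `P`, `Q` are the two single-sample joints and `BC`
is the Bhattacharyya coefficient (`ARC.inferFailProb_mle_le`).

Cauchy–Schwarz gives `TV² + BC² ≤ 1`, so `BC ≤ exp (-c² / 2)` once `TV(P, Q) ≥ c`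
(`bhattacharyya_le`). That separation follows from identifiability because the partial joint is a
marginal of the full joint and marginalizing does not increase total variation
(`TV_prefixJoint_mono`, `ARC.le_TV_joint_update`). A union bound over the `T` steps and at most
`D ≤ nθ` wrong indices finishes the proof. -/

open Finset Filter

noncomputable section

/-- `P` is a probability distribution on the finite set `S`. -/
def IsPMF {S : Type*} [Fintype S] (P : S → ℝ) : Prop :=
  (∀ s, 0 ≤ P s) ∧ ∑ s, P s = 1

/-- Total variation distance between two distributions on a finite set. -/
def TV {S : Type*} [Fintype S] (P Q : S → ℝ) : ℝ :=
  (1 / 2) * ∑ s, |P s - Q s|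

/-- A conditional distribution at step `t`: it maps an input `x ∈ X` and a
history `y_{<t} ∈ Y^t` to a (density of a) distribution on `Y`. -/
abbrev Cond (X Y : Type*) (t : ℕ) : Type _ := X → (Fin t → Y) → Y → ℝ

/-- The joint density on `X × Y^t` obtained by drawing `x ∼ Px` and then
autoregressively `y_s ∼ φ_s (· | x, y_{<s})` for `s < t`. -/
def prefixJoint {X Y : Type*} {t : ℕ} (Px : X → ℝ)
    (φ : ∀ s : Fin t, Cond X Y s.val) : X × (Fin t → Y) → ℝ :=
  fun p => Px p.1 * ∏ s : Fin t,
    φ s p.1 (fun r => p.2 ⟨r.val, lt_trans r.isLt s.isLt⟩) (p.2 s)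

/-- An AutoRegressive Compositional task class `ARC(D,T)`: an input
distribution `Px` on the finite set `X` and, for every step `t < T`, an
injective enumeration `sub t : Fin D → _` of the subtask family `P_{Θ_t}`
(of size `D`) of step-`t` conditional probability distributions. -/
structure ARC (X Y : Type*) [Fintype X] [Fintype Y] (D T : ℕ) where
  Px : X → ℝ
  hPx : IsPMF Px
  sub : ∀ t : Fin T, Fin D → Cond X Y t.val
  hsub_inj : ∀ t, Function.Injective (sub t)
  hpmf : ∀ t i x h, (∀ y, 0 ≤ sub t i x h y) ∧ ∑ y, sub t i x h y = 1

variable {X Y : Type*} [Fintype X] [Fintype Y] {D T : ℕ}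

/-- The task `f_θ = (P_{θ_1},…,P_{θ_T})` indexed by `η ∈ {1,…,D}^T`. -/
def ARC.task (A : ARC X Y D T) (η : Fin T → Fin D) :
    ∀ t : Fin T, Cond X Y t.val :=
  fun t => A.sub t (η t)

/-- The joint distribution `P_θ` on `X × Y^T` induced by the task indexed by `η`. -/
def ARC.joint (A : ARC X Y D T) (η : Fin T → Fin D) : X × (Fin T → Y) → ℝ :=
  prefixJoint A.Px (A.task η)

/-- The partial joint distribution `P_{θ_{1:t-1}, ζ_t}` on `X × Y^t` induced by a
prefix of true subtasks (indexed by `η`) followed by the conditional `ζ` at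
step `t`. -/
def ARC.stepJoint (A : ARC X Y D T) (t : Fin T) (η : Fin t.val → Fin D)
    (ζ : Cond X Y t.val) : X × (Fin (t.val + 1) → Y) → ℝ :=
  prefixJoint A.Px
    (Fin.snoc (α := fun j : Fin (t.val + 1) => Cond X Y j.val)
      (fun s : Fin t.val => A.sub ⟨s.val, lt_trans s.isLt t.isLt⟩ (η s)) ζ)

/-- Identifiability with constant `c`: for every step, every prefix of true
subtasks and all pairs of distinct true subtasks at that step, the induced
partial joints are at total variation distance at least `c`. -/
def IdentifiableSep (A : ARC X Y D T) (c : ℝ) : Prop :=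
  ∀ t : Fin T, ∀ η : Fin t.val → Fin D, ∀ i j : Fin D, i ≠ j →
    c ≤ TV (A.stepJoint t η (A.sub t i)) (A.stepJoint t η (A.sub t j))

/-- Probability, over `ℓ` i.i.d. demonstration samples from the joint
distribution of the task `tgt`, that the procedure `σ` fails to output the
tuple of true conditionals of `tgt`. -/
def inferFailProb (A : ARC X Y D T) (ℓ : ℕ) (tgt : Fin T → Fin D)
    (σ : (Fin ℓ → X × (Fin T → Y)) → ∀ t : Fin T, Cond X Y t.val) : ℝ :=
  ∑ ω : Fin ℓ → X × (Fin T → Y),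
    Set.indicator {ω' | σ ω' ≠ A.task tgt}
      (fun ω' => ∏ l, A.joint tgt (ω' l)) ω

/-! ### Distances between distributions on a finite set -/

/-- Bhattacharyya form of the Le Cam inequality, `TV² + BC² ≤ 1`, combined with
`1 - c² ≤ exp (-c²)`. -/
theorem bhattacharyya_le {S : Type*} [Fintype S] {P Q : S → ℝ} (hP : IsPMF P) (hQ : IsPMF Q)
    {c : ℝ} (hc : 0 < c) (h : c ≤ TV P Q) :
    ∑ s, √(P s * Q s) ≤ Real.exp (-c ^ 2 / 2) := by
  set B := ∑ s, √(P s * Q s) with hB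
  have hB0 : 0 ≤ B := Finset.sum_nonneg fun s _ => Real.sqrt_nonneg _
  have hsq : ∀ s, √(P s * Q s) = √(P s) * √(Q s) := fun s => Real.sqrt_mul (hP.1 s) _
  have h1 : ∑ s, (√(P s) - √(Q s)) ^ 2 = 2 - 2 * B := by
    have : ∀ s, (√(P s) - √(Q s)) ^ 2 = P s + Q s - 2 * √(P s * Q s) := by
      intro s
      rw [hsq, sub_sq, Real.sq_sqrt (hP.1 s), Real.sq_sqrt (hQ.1 s)]
      ring
    simp only [this, Finset.sum_sub_distrib, Finset.sum_add_distrib, hP.2, hQ.2,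
      ← Finset.mul_sum, ← hB]
    ring
  have h2 : ∑ s, (√(P s) + √(Q s)) ^ 2 = 2 + 2 * B := by
    have : ∀ s, (√(P s) + √(Q s)) ^ 2 = P s + Q s + 2 * √(P s * Q s) := by
      intro s
      rw [hsq, add_sq, Real.sq_sqrt (hP.1 s), Real.sq_sqrt (hQ.1 s)]
      ring
    simp only [this, Finset.sum_add_distrib, hP.2, hQ.2, ← Finset.mul_sum, ← hB]
    ring
  have h3 : ∑ s, |P s - Q s| = ∑ s, |√(P s) - √(Q s)| * (√(P s) + √(Q s)) := by
    refine Finset.sum_congr rfl fun s _ => ?_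
    have h0 : 0 ≤ √(P s) + √(Q s) := by positivity
    rw [← abs_of_nonneg h0, ← abs_mul]
    congr 1
    nlinarith [Real.sq_sqrt (hP.1 s), Real.sq_sqrt (hQ.1 s)]
  have h4 := Finset.sum_mul_sq_le_sq_mul_sq Finset.univ
    (fun s => |√(P s) - √(Q s)|) (fun s => √(P s) + √(Q s))
  simp only [sq_abs] at h4
  rw [← h3, h1, h2] at h4
  have h5 : B ^ 2 ≤ Real.exp (-c ^ 2) := by
    have := Real.add_one_le_exp (-c ^ 2)
    unfold TV at h
    nlinarith
  have h6 : Real.exp (-c ^ 2) = Real.exp (-c ^ 2 / 2) ^ 2 := by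
    rw [← Real.exp_nat_mul]
    congr 1
    push_cast
    ring
  rw [h6] at h5
  exact le_of_sq_le_sq h5 (Real.exp_pos _).le

/-! ### Marginals of autoregressive joints -/

/-- Splitting off the last coordinate of a sum over `X × Y^{n+1}`. -/
theorem sum_prod_snoc {n : ℕ} (f : X × (Fin (n + 1) → Y) → ℝ) :
    ∑ p, f p = ∑ p : X × (Fin n → Y), ∑ y : Y,
      f (p.1, Fin.snoc (α := fun _ => Y) p.2 y) := by
  rw [Fintype.sum_prod_type, Fintype.sum_prod_type]
  refine Finset.sum_congr rfl fun x _ => ?_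
  rw [← (Fin.snocEquiv (fun _ : Fin (n + 1) => Y)).sum_comp, Fintype.sum_prod_type_right]
  rfl

theorem prefixJoint_snoc {n : ℕ} (Px : X → ℝ) (φ : ∀ s : Fin (n + 1), Cond X Y s.val)
    (p : X × (Fin n → Y)) (y : Y) :
    prefixJoint Px φ (p.1, Fin.snoc (α := fun _ => Y) p.2 y) =
      prefixJoint Px (fun s : Fin n => φ s.castSucc) p * φ (Fin.last n) p.1 p.2 y := by
  unfold prefixJoint
  rw [Fin.prod_univ_castSucc, ← mul_assoc]
  have h (r : ℕ) (hr : r < n) :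
      (Fin.snoc (α := fun _ => Y) p.2 y : Fin (n + 1) → Y) ⟨r, hr.trans n.lt_succ_self⟩
        = p.2 ⟨r, hr⟩ := Fin.snoc_castSucc (α := fun _ => Y) y p.2 ⟨r, hr⟩
  congr 1
  · congr 1
    refine Finset.prod_congr rfl fun s _ => ?_
    congr 1
    · funext r
      exact h r.val (r.isLt.trans s.isLt)
    · exact h s.val s.isLt
  · congr 1
    · funext r
      exact h r.val r.isLt
    · exact Fin.snoc_last (α := fun _ => Y) y p.2

/-- Summing out the last coordinate gives the joint of the first `n` steps. -/
theorem sum_prefixJoint_snoc {n : ℕ} (Px : X → ℝ) (φ : ∀ s : Fin (n + 1), Cond X Y s.val)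
    (hφ : ∀ s x h, ∑ y, φ s x h y = 1) (p : X × (Fin n → Y)) :
    ∑ y, prefixJoint Px φ (p.1, Fin.snoc (α := fun _ => Y) p.2 y) =
      prefixJoint Px (fun s : Fin n => φ s.castSucc) p := by
  simp only [prefixJoint_snoc]
  rw [← Finset.mul_sum]
  have := hφ (Fin.last n) p.1 p.2
  rw [this, mul_one]

theorem sum_prefixJoint {Px : X → ℝ} (hPx : IsPMF Px) :
    ∀ (n : ℕ) (φ : ∀ s : Fin n, Cond X Y s.val), (∀ s x h, ∑ y, φ s x h y = 1) →
      ∑ p, prefixJoint Px φ p = 1 := by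
  intro n
  induction n with
  | zero =>
    intro φ _
    rw [Fintype.sum_prod_type]
    simpa [prefixJoint] using hPx.2
  | succ n ih =>
    intro φ hφ
    rw [sum_prod_snoc]
    simp only [sum_prefixJoint_snoc Px φ hφ]
    exact ih _ fun s => hφ s.castSucc

theorem TV_prefixJoint_castSucc_le {n : ℕ} (Px : X → ℝ)
    (φ ψ : ∀ s : Fin (n + 1), Cond X Y s.val)
    (hφ : ∀ s x h, ∑ y, φ s x h y = 1) (hψ : ∀ s x h, ∑ y, ψ s x h y = 1) :
    TV (prefixJoint Px (fun s : Fin n => φ s.castSucc))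
        (prefixJoint Px (fun s : Fin n => ψ s.castSucc)) ≤
      TV (prefixJoint Px φ) (prefixJoint Px ψ) := by
  unfold TV
  refine mul_le_mul_of_nonneg_left ?_ (by norm_num)
  rw [sum_prod_snoc]
  refine Finset.sum_le_sum fun p _ => ?_
  rw [← sum_prefixJoint_snoc Px φ hφ, ← sum_prefixJoint_snoc Px ψ hψ, ← Finset.sum_sub_distrib]
  exact Finset.abs_sum_le_sum_abs _ _

/-- Discarding the steps after the first `k` does not increase total variation. -/
theorem TV_prefixJoint_mono (Px : X → ℝ) {k n : ℕ} (hkn : k ≤ n) :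
    ∀ (φ ψ : ∀ s : Fin n, Cond X Y s.val),
    (∀ s x h, ∑ y, φ s x h y = 1) → (∀ s x h, ∑ y, ψ s x h y = 1) →
    TV (prefixJoint Px (fun s : Fin k => φ (s.castLE hkn)))
        (prefixJoint Px (fun s : Fin k => ψ (s.castLE hkn))) ≤
      TV (prefixJoint Px φ) (prefixJoint Px ψ) := by
  induction n, hkn using Nat.le_induction with
  | base => intro φ ψ _ _; exact le_rfl
  | succ n hkn ih =>
    intro φ ψ hφ hψ
    exact (ih (fun s => φ s.castSucc) (fun s => ψ s.castSucc)
      (fun s => hφ s.castSucc) (fun s => hψ s.castSucc)).trans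
      (TV_prefixJoint_castSucc_le Px φ ψ hφ hψ)

/-! ### Joints of tasks that differ in one step -/

theorem ARC.joint_isPMF (A : ARC X Y D T) (η : Fin T → Fin D) : IsPMF (A.joint η) :=
  ⟨fun _ => mul_nonneg (A.hPx.1 _) (Finset.prod_nonneg fun s _ => (A.hpmf s _ _ _).1 _),
    sum_prefixJoint A.hPx _ _ fun s x h => (A.hpmf s _ x h).2⟩

theorem ARC.stepJoint_eq (A : ARC X Y D T) (t : Fin T) (η : Fin T → Fin D) :
    A.stepJoint t (fun s => η ⟨s.val, s.isLt.trans t.isLt⟩) (A.sub t (η t)) =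
      prefixJoint A.Px (fun s : Fin (t.val + 1) => A.task η (s.castLE t.isLt)) := by
  unfold ARC.stepJoint
  congr 1
  funext s
  refine Fin.lastCases ?_ (fun s => ?_) s
  · rw [Fin.snoc_last]
    rfl
  · rw [Fin.snoc_castSucc]
    rfl

/-- Identifiability of the step-`t` subtasks separates the full joints of two tasks that
differ only in step `t`. -/
theorem ARC.le_TV_joint_update (A : ARC X Y D T) {c : ℝ} (hsep : IdentifiableSep A c)
    (η : Fin T → Fin D) (t : Fin T) {j : Fin D} (hj : j ≠ η t) :
    c ≤ TV (A.joint η) (A.joint (Function.update η t j)) := by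
  refine le_trans ?_ (TV_prefixJoint_mono A.Px (k := t.val + 1) t.isLt _ _
    (fun s x h => (A.hpmf s _ x h).2) (fun s x h => (A.hpmf s _ x h).2))
  rw [← A.stepJoint_eq, ← A.stepJoint_eq]
  have hpre : (fun s : Fin t.val => Function.update η t j ⟨s.val, s.isLt.trans t.isLt⟩) =
      fun s : Fin t.val => η ⟨s.val, s.isLt.trans t.isLt⟩ := by
    funext s
    refine Function.update_of_ne (fun h => ?_) _ _
    have := congrArg Fin.val h
    have := s.isLt
    simp_all
  rw [hpre, Function.update_self]
  exact hsep t _ _ _ hj.symm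

/-! ### Stepwise maximum likelihood -/

/-- The likelihood of the step-`t` tokens of the sample `ω`, given their histories, under
the `i`-th step-`t` subtask. -/
def ARC.stepLik (A : ARC X Y D T) {ℓ : ℕ} (ω : Fin ℓ → X × (Fin T → Y)) (t : Fin T)
    (i : Fin D) : ℝ :=
  ∏ l, A.sub t i (ω l).1 (fun r => (ω l).2 ⟨r.val, r.isLt.trans t.isLt⟩) ((ω l).2 t)

/-- Changing step `t` of the task only changes the step-`t` factor of the sample likelihood. -/
theorem ARC.prod_joint_update_ge (A : ARC X Y D T) {ℓ : ℕ} (ω : Fin ℓ → X × (Fin T → Y))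
    (η : Fin T → Fin D) (t : Fin T) (j : Fin D)
    (h : A.stepLik ω t (η t) ≤ A.stepLik ω t j) :
    ∏ l, A.joint η (ω l) ≤ ∏ l, A.joint (Function.update η t j) (ω l) := by
  -- the product of all factors of the joint density other than the step-`t` one
  let R : X × (Fin T → Y) → ℝ := fun p => A.Px p.1 * ∏ s ∈ Finset.univ.erase t,
    A.sub s (η s) p.1 (fun r => p.2 ⟨r.val, r.isLt.trans s.isLt⟩) (p.2 s)
  have hR : ∀ p, 0 ≤ R p := fun p =>
    mul_nonneg (A.hPx.1 _) (Finset.prod_nonneg fun s _ => (A.hpmf s _ _ _).1 _)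
  have hsplit : ∀ i p, A.joint (Function.update η t i) p =
      A.sub t i p.1 (fun r => p.2 ⟨r.val, r.isLt.trans t.isLt⟩) (p.2 t) * R p := by
    intro i p
    unfold ARC.joint prefixJoint ARC.task
    rw [← Finset.mul_prod_erase _ _ (Finset.mem_univ t), Function.update_self, mul_left_comm]
    congr 2
    refine Finset.prod_congr rfl fun s hs => ?_
    rw [Function.update_of_ne (Finset.ne_of_mem_erase hs)]
  have hη := hsplit (η t)
  rw [Function.update_eq_self] at hη
  simp only [hη, hsplit, Finset.prod_mul_distrib]
  exact mul_le_mul_of_nonneg_right h (Finset.prod_nonneg fun l _ => hR _)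

/-- The maximum-likelihood estimate of the step-`t` subtask index. -/
def ARC.mle (A : ARC X Y D T) (hD : 0 < D) {ℓ : ℕ} (ω : Fin ℓ → X × (Fin T → Y))
    (t : Fin T) : Fin D :=
  haveI : Nonempty (Fin D) := ⟨⟨0, hD⟩⟩
  (Finite.exists_max (A.stepLik ω t)).choose

theorem ARC.stepLik_le_mle (A : ARC X Y D T) (hD : 0 < D) {ℓ : ℕ}
    (ω : Fin ℓ → X × (Fin T → Y)) (t : Fin T) (i : Fin D) :
    A.stepLik ω t i ≤ A.stepLik ω t (A.mle hD ω t) :=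
  haveI : Nonempty (Fin D) := ⟨⟨0, hD⟩⟩
  (Finite.exists_max (A.stepLik ω t)).choose_spec i

theorem ARC.inferFailProb_mle_le (A : ARC X Y D T) (hD : 0 < D) {c : ℝ} (hc : 0 < c)
    (hsep : IdentifiableSep A c) (ℓ : ℕ) (η : Fin T → Fin D) :
    inferFailProb A ℓ η (fun ω t => A.sub t (A.mle hD ω t)) ≤
      (T : ℝ) * D * Real.exp (-(c ^ 2 * ℓ) / 2) := by
  have hpt : ∀ ω : Fin ℓ → X × (Fin T → Y),
      Set.indicator {ω' : Fin ℓ → X × (Fin T → Y) |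
          (fun t => A.sub t (A.mle hD ω' t)) ≠ A.task η}
        (fun ω' => ∏ l, A.joint η (ω' l)) ω ≤
      ∑ t, ∑ j ∈ Finset.univ.erase (η t),
        ∏ l, √(A.joint η (ω l) * A.joint (Function.update η t j) (ω l)) := by
    intro ω
    have hnn : ∀ t j, 0 ≤ ∏ l, √(A.joint η (ω l) * A.joint (Function.update η t j) (ω l)) :=
      fun t j => Finset.prod_nonneg fun l _ => Real.sqrt_nonneg _
    have hnn' : ∀ t, 0 ≤ ∑ j ∈ Finset.univ.erase (η t),
        ∏ l, √(A.joint η (ω l) * A.joint (Function.update η t j) (ω l)) :=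
      fun t => Finset.sum_nonneg fun j _ => hnn t j
    refine Set.indicator_apply_le' (fun hω => ?_) fun _ => Finset.sum_nonneg fun t _ => hnn' t
    obtain ⟨t, ht⟩ : ∃ t, A.mle hD ω t ≠ η t := by
      by_contra! hall
      exact hω (funext fun t => congrArg (A.sub t) (hall t))
    refine le_trans ?_ (Finset.single_le_sum (fun t _ => hnn' t) (Finset.mem_univ t))
    refine le_trans ?_ (Finset.single_le_sum (fun j _ => hnn t j)
      (Finset.mem_erase.2 ⟨ht, Finset.mem_univ _⟩))
    have hle := A.prod_joint_update_ge ω η t _ (A.stepLik_le_mle hD ω t (η t))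
    have h0 : 0 ≤ ∏ l, A.joint η (ω l) :=
      Finset.prod_nonneg fun l _ => (A.joint_isPMF η).1 _
    have hs : ∏ l, √(A.joint η (ω l) * A.joint (Function.update η t (A.mle hD ω t)) (ω l)) =
        √((∏ l, A.joint η (ω l)) *
          ∏ l, A.joint (Function.update η t (A.mle hD ω t)) (ω l)) := by
      rw [← Finset.prod_mul_distrib, Real.sqrt_prod]
      exact fun l _ => mul_nonneg ((A.joint_isPMF _).1 _) ((A.joint_isPMF _).1 _)
    rw [hs]
    refine Real.le_sqrt_of_sq_le ?_
    rw [sq]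
    exact mul_le_mul_of_nonneg_left hle h0
  have hterm : ∀ t, ∀ j ∈ Finset.univ.erase (η t),
      ∑ ω : Fin ℓ → X × (Fin T → Y),
        ∏ l, √(A.joint η (ω l) * A.joint (Function.update η t j) (ω l)) ≤
      Real.exp (-(c ^ 2 * ℓ) / 2) := by
    intro t j hj
    -- the Bhattacharyya coefficient is multiplicative over independent samples
    rw [← Fintype.sum_pow (fun p => √(A.joint η p * A.joint (Function.update η t j) p)) ℓ]
    have hb := bhattacharyya_le (A.joint_isPMF η) (A.joint_isPMF (Function.update η t j)) hc
      (A.le_TV_joint_update hsep η t (Finset.ne_of_mem_erase hj))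
    refine (pow_le_pow_left₀ (Finset.sum_nonneg fun p _ => Real.sqrt_nonneg _) hb ℓ).trans ?_
    rw [← Real.exp_nat_mul]
    refine le_of_eq (congrArg _ ?_)
    ring
  unfold inferFailProb
  calc _ ≤ ∑ ω : Fin ℓ → X × (Fin T → Y), ∑ t, ∑ j ∈ Finset.univ.erase (η t),
        ∏ l, √(A.joint η (ω l) * A.joint (Function.update η t j) (ω l)) :=
        Finset.sum_le_sum fun ω _ => hpt ω
    _ = ∑ t, ∑ j ∈ Finset.univ.erase (η t), ∑ ω : Fin ℓ → X × (Fin T → Y),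
        ∏ l, √(A.joint η (ω l) * A.joint (Function.update η t j) (ω l)) := by
        rw [Finset.sum_comm]
        exact Finset.sum_congr rfl fun t _ => Finset.sum_comm
    _ ≤ ∑ t : Fin T, ∑ j ∈ Finset.univ.erase (η t), Real.exp (-(c ^ 2 * ℓ) / 2) :=
        Finset.sum_le_sum fun t _ => Finset.sum_le_sum (hterm t)
    _ ≤ ∑ t : Fin T, ∑ j : Fin D, Real.exp (-(c ^ 2 * ℓ) / 2) :=
        Finset.sum_le_sum fun t _ => Finset.sum_le_sum_of_subset_of_nonneg
          (Finset.erase_subset _ _) fun _ _ _ => (Real.exp_pos _).le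
    _ = _ := by simp [mul_assoc]

/-- **Inference stage (identifying an unseen task from demonstrations).** If at
every step a list of `nθ` (possibly repeating) candidates exhausting the true
subtask family is available, then there is a procedure mapping `ℓ` i.i.d.
demonstration samples of an arbitrary task to a tuple of candidates which
differs from the true tuple `(P_{θ̃₁},…,P_{θ̃_T})` with probability at most
`T·nθ·e^{-c²ℓ/2}`; in particular at most `0.01` when `ℓ ≥ 2·ln(100·T·nθ)/c²`. -/
theorem stmt10 {X Y : Type*} [Fintype X] [Fintype Y] {D T : ℕ}
    (hD : 0 < D) (hT : 0 < T)
    (A : ARC X Y D T) (c : ℝ) (hc : 0 < c) (hsep : IdentifiableSep A c)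
    (nθ : ℕ) (cand : ∀ t : Fin T, Fin nθ → Fin D)
    (hcand : ∀ t, Function.Surjective (cand t)) (ℓ : ℕ) :
    ∃ σ : (Fin ℓ → X × (Fin T → Y)) → ∀ t : Fin T, Cond X Y t.val,
      (∀ data t, ∃ i, σ data t = A.sub t (cand t i)) ∧
      ∀ tgt : Fin T → Fin D,
        inferFailProb A ℓ tgt σ ≤ (T : ℝ) * nθ * Real.exp (-(c ^ 2 * ℓ) / 2) ∧
        ((ℓ : ℝ) ≥ 2 * Real.log (100 * T * nθ) / c ^ 2 →
          inferFailProb A ℓ tgt σ ≤ 0.01) := by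
  have hDn : (D : ℝ) ≤ nθ := by
    have := Fintype.card_le_of_surjective _ (hcand ⟨0, hT⟩)
    simpa using this
  refine ⟨fun ω t => A.sub t (A.mle hD ω t), fun ω t => ?_, fun η => ?_⟩
  · obtain ⟨i, hi⟩ := hcand t (A.mle hD ω t)
    exact ⟨i, by rw [hi]⟩
  have hmain : inferFailProb A ℓ η (fun ω t => A.sub t (A.mle hD ω t)) ≤
      (T : ℝ) * nθ * Real.exp (-(c ^ 2 * ℓ) / 2) :=
    (A.inferFailProb_mle_le hD hc hsep ℓ η).trans (by gcongr)
  refine ⟨hmain, fun hℓ => hmain.trans ?_⟩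
  have hT' : (0 : ℝ) < T := by exact_mod_cast hT
  have hn : (0 : ℝ) < nθ := lt_of_lt_of_le (by exact_mod_cast hD) hDn
  have hpos : (0 : ℝ) < 100 * T * nθ := by positivity
  rw [ge_iff_le, div_le_iff₀ (by positivity)] at hℓ
  have hexp : Real.exp (-(c ^ 2 * ℓ) / 2) ≤ (100 * T * nθ : ℝ)⁻¹ := by
    rw [← Real.exp_log (inv_pos.2 hpos), Real.log_inv]
    refine Real.exp_le_exp.2 ?_
    linarith
  calc (T : ℝ) * nθ * Real.exp (-(c ^ 2 * ℓ) / 2)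
      ≤ (T : ℝ) * nθ * (100 * T * nθ : ℝ)⁻¹ := by gcongr
    _ = 0.01 := by
      field_simp
      norm_num

end
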